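/- For every claim C : Ω → ℝ^d, the set-valued buy price P^b(C) is a convex lower set (P^b(C) = P^b(C) − ℝ^d_+) and the set-valued sell price P^s(C) is a convex upper set (P^s(C) = P^s(C) + ℝ^d_+). -/

import Mathlib

open Pointwise

/-!
By concavity of the utility and condition (b) on the attainable portfolios, the value set has
convex graph as a set-valued map of the endowment. Thus for a fixed target the endowments whose
value set contains the target form a convex set, and by condition (c) this set is upper. The sell
price of a claim is a translate of such a set, and the buy price of a claim is the reflection of
the sell price of the opposite claim.
-/

section ConvexGraph

variable {𝕜 E F : Type*} [Semiring 𝕜] [PartialOrder 𝕜] [AddCommMonoid E] [SMul 𝕜 E]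
  [AddCommMonoid F]

variable (𝕜) in
/-- The set-valued map `G` has convex graph `{(x, v) | v ∈ G x}`. This is condition (b) on the
attainable portfolios, and like that condition it is phrased through Minkowski combinations of the
values of `G`. -/
def ConvexGraph [SMul 𝕜 F] (G : E → Set F) : Prop :=
  ∀ ⦃x y : E⦄ ⦃a b : 𝕜⦄, 0 ≤ a → 0 ≤ b → a + b = 1 → a • G x + b • G y ⊆ G (a • x + b • y)

theorem ConvexGraph.of_forall_one_sub {𝕜 E F : Type*} [Ring 𝕜] [PartialOrder 𝕜]
    [IsOrderedAddMonoid 𝕜] [AddCommMonoid E] [SMul 𝕜 E] [AddCommMonoid F] [SMul 𝕜 F]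
    {G : E → Set F}
    (hG : ∀ (x y : E) (a : 𝕜), 0 ≤ a → a ≤ 1 →
      a • G x + (1 - a) • G y ⊆ G (a • x + (1 - a) • y)) :
    ConvexGraph 𝕜 G := by
  intro x y a b ha hb hab
  obtain rfl : b = 1 - a := eq_sub_of_add_eq' hab
  exact hG x y a ha (sub_nonneg.mp hb)

theorem ConvexGraph.pointwise_closure [SMul 𝕜 F] [TopologicalSpace F] [ContinuousAdd F]
    [ContinuousConstSMul 𝕜 F] {G : E → Set F} (hG : ConvexGraph 𝕜 G) :
    ConvexGraph 𝕜 fun x => closure (G x) := by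
  intro x y a b ha hb hab
  calc a • closure (G x) + b • closure (G y)
      ⊆ closure (a • G x) + closure (b • G y) :=
        Set.add_subset_add (smul_closure_subset a _) (smul_closure_subset b _)
    _ ⊆ closure (a • G x + b • G y) := vadd_set_closure_subset _ _
    _ ⊆ closure (G (a • x + b • y)) := closure_mono (hG ha hb hab)

theorem ConvexGraph.setOf_exists_le {Z : Type*} [AddCommMonoid Z] [SMul 𝕜 Z] [PartialOrder F]
    [IsOrderedAddMonoid F] [Module 𝕜 F] [PosSMulMono 𝕜 F] {A : E → Set Z} {f : Z → F}
    (hA : ConvexGraph 𝕜 A) (hf : ConcaveOn 𝕜 Set.univ f) :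
    ConvexGraph 𝕜 fun x => {v | ∃ W ∈ A x, v ≤ f W} := by
  rintro x y a b ha hb hab _ ⟨_, ⟨v, ⟨W₁, hW₁, hv⟩, rfl⟩, _, ⟨w, ⟨W₂, hW₂, hw⟩, rfl⟩, rfl⟩
  refine ⟨a • W₁ + b • W₂, hA ha hb hab <|
    Set.add_mem_add (Set.smul_mem_smul_set hW₁) (Set.smul_mem_smul_set hW₂), ?_⟩
  calc a • v + b • w ≤ a • f W₁ + b • f W₂ := by gcongr
    _ ≤ f (a • W₁ + b • W₂) := hf.2 trivial trivial ha hb hab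

theorem ConvexGraph.convex_setOf_subset [Module 𝕜 F] {G : E → Set F} (hG : ConvexGraph 𝕜 G)
    (S : Set F) : Convex 𝕜 {x | S ⊆ G x} := by
  intro x hx y hy a b ha hb hab v hv
  rw [← Convex.combo_self hab v]
  exact hG ha hb hab <|
    Set.add_mem_add (Set.smul_mem_smul_set (hx hv)) (Set.smul_mem_smul_set (hy hv))

end ConvexGraph

theorem isUpperSet_setOf_subset {E F : Type*} [Preorder E] {G : E → Set F} (hG : Monotone G)
    (S : Set F) : IsUpperSet {x | S ⊆ G x} :=
  fun _ _ hxy hx => hx.trans (hG hxy)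

section OrderedGroup

variable {E : Type*} [AddCommGroup E] [Preorder E] [IsOrderedAddMonoid E] {s : Set E}

theorem add_Ici_zero_of_isUpperSet (hs : IsUpperSet s) : s + Set.Ici 0 = s :=
  congrArg SetLike.coe (add_zero (⟨s, hs⟩ : UpperSet E))

theorem sub_Ici_zero_of_isLowerSet (hs : IsLowerSet s) : s - Set.Ici 0 = s :=
  Set.Subset.antisymm (Set.sub_subset_iff.mpr fun x hx _ hy => hs (sub_le_self x hy) hx)
    fun x hx => ⟨x, hx, 0, le_rfl, sub_zero x⟩

end OrderedGroup

section Prices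

variable {𝕜 E Z F : Type*} [AddCommGroup Z] [TopologicalSpace F]

section Definitions

variable [Preorder F]

/-- The value set of the claim `C` at endowment `x`: the closure of the set of utility vectors
dominated by `U (W + C)` for some attainable `W ∈ A x`, i.e. of the union of the sets
`U (W + C) - F₊`. -/
def valueSet (A : E → Set Z) (U : Z → F) (x : E) (C : Z) : Set F :=
  closure {v | ∃ W ∈ A x, v ≤ U (W + C)}

variable [AddCommGroup E]

/-- The set-valued buy price `P^b(C)`: the payments `p` after which holding the claim `C` is at
least as good as the initial endowment `x₀` alone, value sets being compared by inclusion. -/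
def buyPrice (A : E → Set Z) (U : Z → F) (x₀ : E) (C : Z) : Set E :=
  {p | valueSet A U x₀ 0 ⊆ valueSet A U (x₀ - p) C}

/-- The set-valued sell price `P^s(C)`: the receipts `p` for which owing the claim `C` is at least
as good as the initial endowment `x₀` alone, value sets being compared by inclusion. -/
def sellPrice (A : E → Set Z) (U : Z → F) (x₀ : E) (C : Z) : Set E :=
  {p | valueSet A U x₀ 0 ⊆ valueSet A U (x₀ + p) (-C)}

theorem buyPrice_eq_neg_sellPrice_neg (A : E → Set Z) (U : Z → F) (x₀ : E) (C : Z) :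
    buyPrice A U x₀ C = -sellPrice A U x₀ (-C) := by
  ext p
  simp only [buyPrice, sellPrice, Set.mem_neg, Set.mem_ofPred_eq, neg_neg, sub_eq_add_neg]

end Definitions

section Convexity

variable [Ring 𝕜] [PartialOrder 𝕜] [AddCommGroup E] [Module 𝕜 E] [Module 𝕜 Z]
  [AddCommMonoid F] [PartialOrder F] [IsOrderedAddMonoid F] [Module 𝕜 F] [PosSMulMono 𝕜 F]
  [ContinuousAdd F] [ContinuousConstSMul 𝕜 F] {A : E → Set Z} {U : Z → F}

theorem convexGraph_valueSet (hA : ConvexGraph 𝕜 A) (hU : ConcaveOn 𝕜 Set.univ U) (C : Z) :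
    ConvexGraph 𝕜 fun x => valueSet A U x C :=
  (hA.setOf_exists_le (hU.translate_left C)).pointwise_closure

theorem convex_sellPrice (hA : ConvexGraph 𝕜 A) (hU : ConcaveOn 𝕜 Set.univ U) (x₀ : E) (C : Z) :
    Convex 𝕜 (sellPrice A U x₀ C) :=
  ((convexGraph_valueSet hA hU (-C)).convex_setOf_subset _).translate_preimage_right x₀

theorem convex_buyPrice (hA : ConvexGraph 𝕜 A) (hU : ConcaveOn 𝕜 Set.univ U) (x₀ : E) (C : Z) :
    Convex 𝕜 (buyPrice A U x₀ C) := by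
  rw [buyPrice_eq_neg_sellPrice_neg]
  exact (convex_sellPrice hA hU x₀ (-C)).neg

end Convexity

section Monotonicity

variable [Preorder E] [Preorder F] {A : E → Set Z}

theorem monotone_valueSet (hA : Monotone A) (U : Z → F) (C : Z) :
    Monotone fun x => valueSet A U x C :=
  fun _ _ hxy => closure_mono fun _ ⟨W, hW, hv⟩ => ⟨W, hA hxy hW, hv⟩

variable [AddCommGroup E] [IsOrderedAddMonoid E]

theorem isUpperSet_sellPrice (hA : Monotone A) (U : Z → F) (x₀ : E) (C : Z) :
    IsUpperSet (sellPrice A U x₀ C) :=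
  (isUpperSet_setOf_subset (monotone_valueSet hA U (-C)) _).preimage (add_right_mono (a := x₀))

theorem isLowerSet_buyPrice (hA : Monotone A) (U : Z → F) (x₀ : E) (C : Z) :
    IsLowerSet (buyPrice A U x₀ C) := by
  rw [buyPrice_eq_neg_sellPrice_neg]
  exact fun _ _ hpq hp => isUpperSet_sellPrice hA U x₀ (-C) (neg_le_neg_iff.mpr hpq) hp

end Monotonicity

end Prices

section ExpectedUtility

variable {𝕜 Ω E ι κ : Type*} [CommSemiring 𝕜] [Fintype Ω]

/-- The vector of expected utilities of a random vector `W`, with one component for each utility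
function `u i` and each model `Q j`, given by its point weights. -/
def expectedUtility (Q : κ → Ω → 𝕜) (u : ι → E → 𝕜) (W : Ω → E) : ι × κ → 𝕜 :=
  fun ij => ∑ ω, Q ij.2 ω * u ij.1 (W ω)

theorem concaveOn_expectedUtility [PartialOrder 𝕜] [IsOrderedRing 𝕜] [AddCommMonoid E]
    [SMul 𝕜 E] {Q : κ → Ω → 𝕜} {u : ι → E → 𝕜} (hQ : ∀ j ω, 0 ≤ Q j ω)
    (hu : ∀ i, ConcaveOn 𝕜 Set.univ (u i)) :
    ConcaveOn 𝕜 Set.univ (expectedUtility Q u) := by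
  refine ⟨convex_univ, fun W₁ _ W₂ _ a b ha hb hab ⟨i, j⟩ => ?_⟩
  calc a * ∑ ω, Q j ω * u i (W₁ ω) + b * ∑ ω, Q j ω * u i (W₂ ω)
      = ∑ ω, Q j ω * (a * u i (W₁ ω) + b * u i (W₂ ω)) := by
        simp only [Finset.mul_sum, ← Finset.sum_add_distrib, mul_add, mul_left_comm]
    _ ≤ ∑ ω, Q j ω * u i (a • W₁ ω + b • W₂ ω) :=
        Finset.sum_le_sum fun ω _ =>
          mul_le_mul_of_nonneg_left ((hu i).2 trivial trivial ha hb hab) (hQ j ω)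

end ExpectedUtility

theorem stmt7_general {𝕜 E Z F : Type*} [Ring 𝕜] [PartialOrder 𝕜]
    [AddCommGroup E] [Preorder E] [IsOrderedAddMonoid E] [Module 𝕜 E]
    [AddCommGroup Z] [Module 𝕜 Z]
    [AddCommMonoid F] [PartialOrder F] [IsOrderedAddMonoid F] [Module 𝕜 F] [PosSMulMono 𝕜 F]
    [TopologicalSpace F] [ContinuousAdd F] [ContinuousConstSMul 𝕜 F]
    {A : E → Set Z} {U : Z → F} (hAconv : ConvexGraph 𝕜 A) (hAmono : Monotone A)
    (hU : ConcaveOn 𝕜 Set.univ U) (x₀ : E) (C : Z) :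
    Convex 𝕜 (buyPrice A U x₀ C) ∧ buyPrice A U x₀ C = buyPrice A U x₀ C - {x : E | 0 ≤ x} ∧
    Convex 𝕜 (sellPrice A U x₀ C) ∧
      sellPrice A U x₀ C = sellPrice A U x₀ C + {x : E | 0 ≤ x} :=
  ⟨convex_buyPrice hAconv hU x₀ C,
    (sub_Ici_zero_of_isLowerSet (isLowerSet_buyPrice hAmono U x₀ C)).symm,
    convex_sellPrice hAconv hU x₀ C,
    (add_Ici_zero_of_isUpperSet (isUpperSet_sellPrice hAmono U x₀ C)).symm⟩

theorem stmt7
    {d r s : ℕ} (hd : 0 < d) (hr : 0 < r) (hs : 0 < s)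
    {Ω : Type} [Fintype Ω] [Nonempty Ω]
    (Q : Fin s → Ω → ℝ)
    (hQ0 : ∀ j ω, 0 ≤ Q j ω) (hQ1 : ∀ j, ∑ ω : Ω, Q j ω = 1)
    (u : Fin r → (Fin d → ℝ) → ℝ)
    (hcont : ∀ i, Continuous (u i))
    (hconc : ∀ i, ConcaveOn ℝ Set.univ (u i))
    (hmono : ∀ i, Monotone (u i))
    (hstrict : ∀ i (x y : Fin d → ℝ), (∀ k, x k < y k) → u i x < u i y)
    (A : (Fin d → ℝ) → Set (Ω → Fin d → ℝ))
    (hAconv : ∀ x, Convex ℝ (A x))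
    (hAcomb : ∀ (x y : Fin d → ℝ) (a : ℝ), 0 ≤ a → a ≤ 1 →
      a • A x + (1 - a) • A y ⊆ A (a • x + (1 - a) • y))
    (hAmono : ∀ x y : Fin d → ℝ, x ≤ y → A x ⊆ A y)
    (x0 : Fin d → ℝ) :
    let U : (Ω → Fin d → ℝ) → (Fin r × Fin s → ℝ) :=
      fun W ij => ∑ ω : Ω, Q ij.2 ω * u ij.1 (W ω)
    let V : (Fin d → ℝ) → (Ω → Fin d → ℝ) → Set (Fin r × Fin s → ℝ) :=
      fun x C => closure {v | ∃ W ∈ A x, v ≤ U (W + C)}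
    let Pb : (Ω → Fin d → ℝ) → Set (Fin d → ℝ) :=
      fun C => {p | V x0 0 ⊆ V (x0 - p) C}
    let Ps : (Ω → Fin d → ℝ) → Set (Fin d → ℝ) :=
      fun C => {p | V x0 0 ⊆ V (x0 + p) (-C)}
    ∀ C : Ω → Fin d → ℝ,
      Convex ℝ (Pb C) ∧ Pb C = Pb C - {x : Fin d → ℝ | 0 ≤ x} ∧
      Convex ℝ (Ps C) ∧ Ps C = Ps C + {x : Fin d → ℝ | 0 ≤ x} := by
  intro _ _ _ _
  exact stmt7_general (.of_forall_one_sub hAcomb) hAmono (concaveOn_expectedUtility hQ0 hconc) x0
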